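/- Let n ∈ ℕ, let P₀ and P₁ be n×n real column-stochastic matrices (entrywise nonnegative with each column summing to 1), let e ∈ [0,1]ⁿ, let E := diag(e) and d := 1 − e (entrywise). Let a, ā, c, M, B ∈ ℝ with a² > 1, 0 < ā² < c² < 1, M > 0, B > 0; set M̄ := M/(a²−1). Suppose a²·ρ(P₁E) < 1. For θ ∈ ℕ with θ ≥ 1, γ ∈ {1,…,n} and y > 0, define g̃_θ(b,γ) := b^θ dᵀ (I − bP₁E)⁻¹ P₀^{θ−1} P₁ δ_γ, ν := max{ θ, ⌈ log(y/B)/log(1/c²) ⌉ }, f̃_θ(b,γ) := b^ν dᵀ (P₁E)^{ν−θ} (I − bP₁E)⁻¹ P₀^{θ−1} P₁ δ_γ, and J(θ,y,γ) := g̃_θ(ā²,γ)·y + M̄·( g̃_θ(a²,γ) − g̃_θ(1,γ) ) − ( B·f̃_θ(1,γ) + y·( g̃_θ(c²,γ) − f̃_θ(c²,γ) ) ). Then for every y > 0, J(θ,y,γ) ≤ R(θ,γ) where R(θ,γ) := ( g̃_θ(ā²,γ) − g̃_θ(c²,γ) )·B·c^{−2θ} + M̄·( g̃_θ(a²,γ)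 − g̃_θ(1,γ) ). -/

import Mathlib

/-!
Write `K = P₁E`, `v = P₀^{θ-1} P₁ δ_γ` and `w j = dᵀ K^j v`; every `w j` is nonnegative. Since
`a² > 1`, the hypothesis gives `ρ(K) < 1`, so by Gelfand's formula the powers of `K` are summable
(`summable_pow_entry`), and for `0 ≤ b ≤ 1` the Neumann series for `(I - bK)⁻¹` turns the two
functions into power series with coefficients `w j` (`hasSum_resolvent`):

`g̃_θ(b) = ∑_{j ≥ 0} b^{θ+j} w j` and `f̃_θ(b) = ∑_{j ≥ ν-θ} b^{θ+j} w j`.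

The `M̄` terms on both sides agree, and what remains is compared coefficient by coefficient, with
`k = θ + j` and `X = B c^{-2θ}`:

* if `k < ν`, then `ν > θ` is given by the ceiling, which forces `y ≥ X`, hence
  `(ā^{2k} - c^{2k}) y ≤ (ā^{2k} - c^{2k}) X`;
* if `k ≥ ν`, then `c^{2k} y ≤ B` and `c^{2k} X ≤ B`, hence
  `ā^{2k} (y - X) ≤ max 0 (c^{2k} (y - X)) ≤ B - c^{2k} X`.
-/

open Matrix

/-- Spectral radius of a real square matrix, computed via its complex spectrum. -/
noncomputable def specRad {n : ℕ} (K : Matrix (Fin n) (Fin n) ℝ) : ℝ :=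
  (spectralRadius ℂ (K.map Complex.ofReal)).toReal

/-- A real square matrix is column stochastic if it is entrywise nonnegative
with each column summing to 1. -/
def ColStochastic {n : ℕ} (P : Matrix (Fin n) (Fin n) ℝ) : Prop :=
  (∀ i j, 0 ≤ P i j) ∧ ∀ j, (∑ i, P i j) = 1

section Gelfand

open scoped Matrix.Norms.Operator

/-- The powers of a complex square matrix of spectral radius less than one are summable in norm,
by Gelfand's formula and the root test. -/
theorem summable_norm_pow_of_spectralRadius_lt_one {n : ℕ} (A : Matrix (Fin n) (Fin n) ℂ)
    (h : spectralRadius ℂ A < 1) : Summable fun k : ℕ => ‖A ^ k‖ := by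
  obtain ⟨r, hr, hr1⟩ := ENNReal.lt_iff_exists_nnreal_btwn.1 h
  have hr1' : (r : ℝ) < 1 := by exact_mod_cast hr1
  have hG := spectrum.pow_nnnorm_pow_one_div_tendsto_nhds_spectralRadius A
  have hev := hG.eventually (gt_mem_nhds hr)
  refine Summable.of_norm_bounded_eventually_nat (g := fun k => (r : ℝ) ^ k)
    (summable_geometric_of_lt_one r.2 hr1') ?_
  filter_upwards [hev, Filter.eventually_gt_atTop 0] with k hk hk0
  have hk0' : (k : ℝ) ≠ 0 := by positivity
  have h1 := ENNReal.rpow_le_rpow hk.le (Nat.cast_nonneg (α := ℝ) k)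
  rw [← ENNReal.rpow_mul, one_div_mul_cancel hk0', ENNReal.rpow_one, ENNReal.rpow_natCast] at h1
  rw [norm_norm]
  exact_mod_cast h1

/-- The spectral radius of a matrix is finite, so that taking `toReal` of it loses nothing. -/
theorem spectralRadius_ne_top {n : ℕ} [Nonempty (Fin n)] (A : Matrix (Fin n) (Fin n) ℂ) :
    spectralRadius ℂ A ≠ ⊤ :=
  ne_top_of_le_ne_top ENNReal.coe_ne_top (spectrum.spectralRadius_le_nnnorm A)

theorem norm_entry_le_norm {n : ℕ} (A : Matrix (Fin n) (Fin n) ℂ) (i j : Fin n) :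
    ‖A i j‖ ≤ ‖A‖ := by
  have h : ‖A i j‖₊ ≤ ‖A‖₊ := by
    rw [Matrix.linfty_opNNNorm_def]
    exact (Finset.single_le_sum (f := fun j => ‖A i j‖₊) (fun _ _ => zero_le)
      (Finset.mem_univ j)).trans
      (Finset.le_sup (f := fun i => ∑ j, ‖A i j‖₊) (Finset.mem_univ i))
  exact_mod_cast h

theorem summable_pow_entry {n : ℕ} (K : Matrix (Fin n) (Fin n) ℝ) (h : specRad K < 1)
    (i j : Fin n) : Summable fun k : ℕ => |(K ^ k) i j| := by
  have : Nonempty (Fin n) := ⟨i⟩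
  have h' : spectralRadius ℂ (K.map Complex.ofReal) < 1 := by
    rw [← ENNReal.toReal_lt_toReal (spectralRadius_ne_top _) ENNReal.one_ne_top]
    simpa [specRad] using h
  refine (summable_norm_pow_of_spectralRadius_lt_one _ h').of_nonneg_of_le
    (fun _ => abs_nonneg _) fun k => ?_
  have hmap : (K.map Complex.ofReal) ^ k = (K ^ k).map Complex.ofReal :=
    (map_pow (Complex.ofRealHom.mapMatrix) K k).symm
  have := norm_entry_le_norm ((K.map Complex.ofReal) ^ k) i j
  rw [hmap] at this ⊢
  simpa using this

end Gelfand

theorem hasSum_neumann {n : ℕ} (K : Matrix (Fin n) (Fin n) ℝ) (h : specRad K < 1)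
    (b : ℝ) (hb0 : 0 ≤ b) (hb1 : b ≤ 1) :
    HasSum (fun k : ℕ => (b • K) ^ k) (1 - b • K)⁻¹ := by
  have hs : Summable (fun k : ℕ => (b • K) ^ k) := by
    refine Pi.summable.2 fun i => Pi.summable.2 fun j => ?_
    refine Summable.of_norm_bounded (summable_pow_entry K h i j) fun k => ?_
    rw [smul_pow, Matrix.smul_apply, smul_eq_mul, norm_mul, Real.norm_eq_abs, Real.norm_eq_abs,
      abs_of_nonneg (pow_nonneg hb0 k)]
    exact mul_le_of_le_one_left (abs_nonneg _) (pow_le_one₀ hb0 hb1)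
  rw [Matrix.inv_eq_right_inv hs.one_sub_mul_tsum_pow]
  exact hs.hasSum

/-- Power series of the tail functional `b^{θ+m} dᵀ K^m (I - bK)⁻¹ v`. -/
theorem hasSum_resolvent {n : ℕ} (K : Matrix (Fin n) (Fin n) ℝ) (h : specRad K < 1)
    (b : ℝ) (hb0 : 0 ≤ b) (hb1 : b ≤ 1) (d v : Fin n → ℝ) (θ m : ℕ) :
    HasSum (fun j : ℕ => if m ≤ j then b ^ (θ + j) * (d ⬝ᵥ (K ^ j).mulVec v) else 0)
      (b ^ (θ + m) * (d ⬝ᵥ (K ^ m * (1 - b • K)⁻¹).mulVec v)) := by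
  let L : Matrix (Fin n) (Fin n) ℝ →+ ℝ :=
    { toFun := fun X => b ^ (θ + m) * (d ⬝ᵥ (K ^ m * X).mulVec v)
      map_zero' := by simp
      map_add' := fun X Y => by
        rw [Matrix.mul_add, Matrix.add_mulVec, dotProduct_add, mul_add] }
  have hL : Continuous L := by
    change Continuous fun X => b ^ (θ + m) * (d ⬝ᵥ (K ^ m * X).mulVec v)
    fun_prop
  have hS := (hasSum_neumann K h b hb0 hb1).map L hL
  have hiff := (hasSum_nat_add_iff (f := fun j : ℕ => if m ≤ j then
    b ^ (θ + j) * (d ⬝ᵥ (K ^ j).mulVec v) else 0) m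
    (g := b ^ (θ + m) * (d ⬝ᵥ (K ^ m * (1 - b • K)⁻¹).mulVec v))).1 ?_
  · rwa [Finset.sum_eq_zero, add_zero] at hiff
    intro j hj
    rw [if_neg (by simpa using hj)]
  · refine Eq.subst (motive := fun F => HasSum F _) (funext fun k => ?_) hS
    symm
    change _ = b ^ (θ + m) * (d ⬝ᵥ (K ^ m * (b • K) ^ k).mulVec v)
    rw [if_pos (Nat.le_add_left m k), smul_pow, Matrix.mul_smul, Matrix.smul_mulVec,
      dotProduct_smul, smul_eq_mul, ← pow_add, ← mul_assoc, ← pow_add, Nat.add_comm k m,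
      Nat.add_assoc]

theorem mul_entry_nonneg {n : ℕ} {A C : Matrix (Fin n) (Fin n) ℝ} (hA : ∀ i j, 0 ≤ A i j)
    (hC : ∀ i j, 0 ≤ C i j) (i j : Fin n) : 0 ≤ (A * C) i j := by
  rw [Matrix.mul_apply]
  exact Finset.sum_nonneg fun k _ => mul_nonneg (hA i k) (hC k j)

theorem pow_entry_nonneg {n : ℕ} {A : Matrix (Fin n) (Fin n) ℝ} (hA : ∀ i j, 0 ≤ A i j)
    (k : ℕ) : ∀ i j, 0 ≤ (A ^ k) i j := by
  induction k with
  | zero =>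
    intro i j
    rw [pow_zero, Matrix.one_apply]
    split_ifs <;> norm_num
  | succ k ih =>
    rw [pow_succ]
    exact mul_entry_nonneg ih hA

/-- Comparison of the coefficients of `w j`, with `p = ā²`, `q = c²`, `ν = max θ N` and `j ≥ 0` the
offset of `k = θ + j`; `N` is the ceiling appearing in the definition of `ν`. -/
theorem coeff_le (p q B y : ℝ) (hp : 0 < p) (hpq : p < q) (hq : q < 1) (hB : 0 < B) (hy : 0 < y)
    (θ N j : ℕ) (hN : N = (Int.ceil (Real.log (y / B) / Real.log (1 / q))).toNat) :
    p ^ (θ + j) * y - (B * (if max θ N - θ ≤ j then 1 else 0)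
        + y * (q ^ (θ + j) - if max θ N - θ ≤ j then q ^ (θ + j) else 0))
      ≤ (p ^ (θ + j) - q ^ (θ + j)) * (B / q ^ θ) := by
  have hq0 : 0 < q := hp.trans hpq
  have hl : 0 < Real.log (1 / q) := Real.log_pos (by rw [lt_div_iff₀ hq0]; linarith)
  have hyB : 0 < y / B := div_pos hy hB
  have hlog : ∀ k : ℕ, (k : ℝ) * Real.log (1 / q) = Real.log (1 / q ^ k) := fun k => by
    rw [← Real.log_pow, _root_.one_div_pow]
  have hpk : p ^ (θ + j) ≤ q ^ (θ + j) := pow_le_pow_left₀ hp.le hpq.le _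
  have hpk0 : 0 < p ^ (θ + j) := pow_pos hp _
  have hqk0 : 0 < q ^ (θ + j) := pow_pos hq0 _
  have hqθ : 0 < q ^ θ := pow_pos hq0 _
  split_ifs with hj
  · have hNk : N ≤ θ + j := by omega
    have h1 : Real.log (y / B) / Real.log (1 / q) ≤ ((θ + j : ℕ) : ℝ) := by
      refine (Int.le_ceil _).trans ?_
      have : Int.ceil (Real.log (y / B) / Real.log (1 / q)) ≤ ((θ + j : ℕ) : ℤ) := by omega
      exact_mod_cast this
    rw [div_le_iff₀ hl, hlog, Real.log_le_log_iff hyB (by positivity),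
      div_le_div_iff₀ hB hqk0] at h1
    have h2 : q ^ (θ + j) * (B / q ^ θ) ≤ B := by
      rw [pow_add, mul_comm (q ^ θ), mul_assoc, mul_div_cancel₀ _ hqθ.ne']
      exact mul_le_of_le_one_left hB.le (pow_le_one₀ hq0.le hq.le)
    rcases le_total (B / q ^ θ) y with h3 | h3
    · nlinarith [mul_le_mul_of_nonneg_right hpk (sub_nonneg.2 h3)]
    · nlinarith [mul_le_mul_of_nonneg_left h3 hpk0.le]
  · have h1 : θ < N := by omega
    have h2 : ((θ : ℤ) : ℝ) < Real.log (y / B) / Real.log (1 / q) := by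
      rw [← Int.lt_ceil]
      omega
    rw [Int.cast_natCast, lt_div_iff₀ hl, hlog, Real.log_lt_log_iff (by positivity) hyB,
      div_lt_div_iff₀ hqθ hB] at h2
    have h3 : B / q ^ θ ≤ y := by
      rw [div_le_iff₀ hqθ]; linarith
    nlinarith [mul_le_mul_of_nonneg_right hpk (sub_nonneg.2 h3)]

/-- **Uniform upper bound on the performance-evaluation function.** For every
`y > 0`, the closed form `J(θ,y,γ)` of the performance-evaluation function is
bounded above by `R(θ,γ) = (g̃_θ(ā²,γ) - g̃_θ(c²,γ))·B·c^{-2θ} + M̄·(g̃_θ(a²,γ) - g̃_θ(1,γ))`. -/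
theorem pef_uniform_upper_bound (n : ℕ) (P0 P1 : Matrix (Fin n) (Fin n) ℝ)
    (hP0 : ColStochastic P0) (hP1 : ColStochastic P1)
    (e : Fin n → ℝ) (he : ∀ i, e i ∈ Set.Icc (0 : ℝ) 1)
    (a abar c M B : ℝ)
    (ha : 1 < a ^ 2) (h1 : 0 < abar ^ 2) (h2 : abar ^ 2 < c ^ 2) (h3 : c ^ 2 < 1)
    (hM : 0 < M) (hB : 0 < B)
    (hρ : a ^ 2 * specRad (P1 * Matrix.diagonal e) < 1)
    (θ : ℕ) (hθ : 1 ≤ θ) (γ : Fin n) :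
    ∀ y : ℝ, 0 < y →
      (let PE := P1 * Matrix.diagonal e
       let d : Fin n → ℝ := fun i => 1 - e i
       let Mbar : ℝ := M / (a ^ 2 - 1)
       let vγ : Fin n → ℝ := (P0 ^ (θ - 1) * P1).mulVec (Pi.single γ 1)
       let gt : ℝ → ℝ := fun b => b ^ θ * (d ⬝ᵥ ((1 - b • PE)⁻¹).mulVec vγ)
       let ν : ℕ := max θ (Int.ceil (Real.log (y / B) / Real.log (1 / c ^ 2))).toNat
       let ft : ℝ → ℝ := fun b =>
         b ^ ν * (d ⬝ᵥ ((PE ^ (ν - θ)) * (1 - b • PE)⁻¹).mulVec vγ)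
       gt (abar ^ 2) * y + Mbar * (gt (a ^ 2) - gt 1)
           - (B * ft 1 + y * (gt (c ^ 2) - ft (c ^ 2)))
         ≤ (gt (abar ^ 2) - gt (c ^ 2)) * (B / c ^ (2 * θ))
           + Mbar * (gt (a ^ 2) - gt 1)) := by
  intro y hy PE d Mbar vγ gt ν ft
  have hPE : ∀ i j, 0 ≤ PE i j := fun i j => by
    change 0 ≤ (P1 * Matrix.diagonal e) i j
    rw [Matrix.mul_diagonal]
    exact mul_nonneg (hP1.1 i j) (he j).1
  have hv : ∀ i, 0 ≤ vγ i := fun i => by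
    change 0 ≤ ((P0 ^ (θ - 1) * P1).mulVec (Pi.single γ 1)) i
    rw [Matrix.mulVec_single_one]
    exact mul_entry_nonneg (pow_entry_nonneg hP0.1 _) hP1.1 i γ
  have hw : ∀ j : ℕ, 0 ≤ d ⬝ᵥ (PE ^ j).mulVec vγ := fun j =>
    Finset.sum_nonneg fun i _ => mul_nonneg (sub_nonneg.2 (he i).2)
      (by
        rw [Matrix.mulVec, dotProduct]
        exact Finset.sum_nonneg fun l _ => mul_nonneg (pow_entry_nonneg hPE j i l) (hv l))
  have hspec : specRad PE < 1 := by
    have h0 : 0 ≤ specRad PE := ENNReal.toReal_nonneg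
    have h' : a ^ 2 * specRad PE < 1 := hρ
    nlinarith
  have hc0 : 0 < c ^ 2 := h1.trans h2
  have hg : ∀ b : ℝ, 0 ≤ b → b ≤ 1 →
      HasSum (fun j : ℕ => b ^ (θ + j) * (d ⬝ᵥ (PE ^ j).mulVec vγ)) (gt b) := fun b hb0 hb1 => by
    simpa using hasSum_resolvent PE hspec b hb0 hb1 d vγ θ 0
  have hf : ∀ b : ℝ, 0 ≤ b → b ≤ 1 →
      HasSum (fun j : ℕ => if ν - θ ≤ j then b ^ (θ + j) * (d ⬝ᵥ (PE ^ j).mulVec vγ) else 0)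
        (ft b) := fun b hb0 hb1 => by
    have h := hasSum_resolvent PE hspec b hb0 hb1 d vγ θ (ν - θ)
    rwa [Nat.add_sub_cancel' (le_max_left _ _ : θ ≤ ν)] at h
  have hga := hg (abar ^ 2) h1.le (h2.trans h3).le
  have hgc := hg (c ^ 2) hc0.le h3.le
  have hL := (hga.mul_right y).sub
    (((hf 1 zero_le_one le_rfl).mul_left B).add ((hgc.sub (hf (c ^ 2) hc0.le h3.le)).mul_left y))
  have hR := (hga.sub hgc).mul_right (B / c ^ (2 * θ))
  have key := hasSum_le (fun j => ?_) hL hR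
  · linarith
  · have hco := mul_le_mul_of_nonneg_right
      (coeff_le (abar ^ 2) (c ^ 2) B y h1 h2 h3 hB hy θ _ j rfl) (hw j)
    rw [← pow_mul c 2 θ] at hco
    change (_ - (B * (if ν - θ ≤ j then 1 else 0) +
      y * (_ - if ν - θ ≤ j then (c ^ 2) ^ (θ + j) else 0))) * _ ≤ _ at hco
    rw [one_pow]
    split_ifs at hco ⊢ <;> linarith
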